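/- There is exactly one shift vector q : ZMod m → ℝ with q(0) = 0 that is a critical point of the MQC element energy Ẽ (i.e., the partial derivative of Ẽ with respect to each component q(γ), γ ≠ 0, vanishes), and at this critical point the energy equals Ẽ(q) = H(ψ)·a²/2. -/

import Mathlib

/-! The derivative of the energy in the component `q γ` is `(σ (γ - 1) - σ γ) / m`, where
`σ β = ψ β * (a + (q (β + 1) - q β))` is the stress (`deriv_energy`). Criticality away from `0`
therefore says that `σ` is constant along the chain `0, 1, …, m - 1`, i.e. equal to some `c`.
Since the differences `q (β + 1) - q β` sum to zero over the cycle, summing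
`a + (q (β + 1) - q β) = c / ψ β` gives `m * a = c * ∑ 1 / ψ`, so `c = H(ψ) * a`
(`stress_eq`). This fixes all differences of `q`, hence `q` itself given `q 0 = 0`, and the energy
is the mean of `c * (a + (q (β + 1) - q β)) / 2`, namely `c * a / 2`. Conversely the differences
`c / ψ β - a` sum to zero over the cycle, so they are the differences of some `q`
(`exists_primitive`). -/

/-- The chain `0, 1, …, m - 1` connects all of `ZMod m` without the step from `-1` to `0`. -/
lemma eq_apply_zero_of_step {m : ℕ} [NeZero m] {f : ZMod m → ℝ}
    (h : ∀ γ : ZMod m, γ ≠ 0 → f (γ - 1) = f γ) (β : ZMod m) : f β = f 0 := by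
  have key : ∀ k : ℕ, k < m → f (k : ZMod m) = f 0 := by
    intro k
    induction k with
    | zero => intro _; simp
    | succ k ih =>
      intro hk
      have hne : ((k + 1 : ℕ) : ZMod m) ≠ 0 := by
        rw [Ne, ZMod.natCast_eq_zero_iff]
        exact Nat.not_dvd_of_pos_of_lt k.succ_pos hk
      rw [← h _ hne]
      simpa using ih (by omega)
  simpa using key β.val β.val_lt

lemma sum_diff_eq_zero {m : ℕ} [NeZero m] (q : ZMod m → ℝ) :
    ∑ β : ZMod m, (q (β + 1) - q β) = 0 := by
  rw [Finset.sum_sub_distrib, sub_eq_zero]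
  exact Equiv.sum_comp (Equiv.addRight (1 : ZMod m)) q

/-- On the cycle, a function of mean zero is a discrete derivative. -/
lemma exists_primitive {m : ℕ} [NeZero m] (d : ZMod m → ℝ) (hd : ∑ β : ZMod m, d β = 0) :
    ∃ q : ZMod m → ℝ, q 0 = 0 ∧ ∀ β, q (β + 1) - q β = d β := by
  have hr : ∑ j ∈ Finset.range m, d (j : ZMod m) = 0 := by
    rw [← hd]
    refine Finset.sum_nbij' (fun j : ℕ => (j : ZMod m)) (fun β => β.val) ?_ ?_ ?_ ?_ ?_
    · simp
    · intro β _; simpa using β.val_lt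
    · intro j hj; exact ZMod.val_cast_of_lt (Finset.mem_range.1 hj)
    · intro β _; simp
    · simp
  refine ⟨fun β => ∑ j ∈ Finset.range β.val, d (j : ZMod m), by simp, fun β => ?_⟩
  have hβ : β + 1 = ((β.val + 1 : ℕ) : ZMod m) := by simp
  have hs := Finset.sum_range_succ (fun j : ℕ => d (j : ZMod m)) β.val
  rw [ZMod.natCast_zmod_val] at hs
  rcases Nat.lt_or_ge (β.val + 1) m with hlt | hge
  · have hv : (β + 1).val = β.val + 1 := by rw [hβ]; exact ZMod.val_cast_of_lt hlt
    simp only [hv]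
    linarith
  -- Wrapping around the cycle: the full sum vanishes.
  · have hm : β.val + 1 = m := le_antisymm β.val_lt hge
    have hv : (β + 1).val = 0 := by rw [hβ, hm]; simp
    rw [hm, hr] at hs
    simp only [hv, Finset.range_zero, Finset.sum_empty]
    linarith

lemma deriv_energy {m : ℕ} [NeZero m] (ψ : ZMod m → ℝ) (a : ℝ) (q : ZMod m → ℝ) (γ : ZMod m) :
    deriv (fun t => (1 / (m : ℝ)) * ∑ β : ZMod m, ψ β * (a + (Function.update q γ t (β + 1)
      - Function.update q γ t β)) ^ 2 / 2) (q γ) =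
    (1 / (m : ℝ)) * (ψ (γ - 1) * (a + (q (γ - 1 + 1) - q (γ - 1)))
      - ψ γ * (a + (q (γ + 1) - q γ))) := by
  have hu : ∀ δ : ZMod m, HasDerivAt (fun t => Function.update q γ t δ)
      (if δ = γ then 1 else 0) (q γ) := by
    intro δ
    have := (hasDerivAt_pi.1 (hasDerivAt_update q γ (q γ))) δ
    simpa [Pi.single_apply] using this
  have hterm : ∀ β : ZMod m, HasDerivAt (fun t => ψ β * (a + (Function.update q γ t (β + 1)
      - Function.update q γ t β)) ^ 2 / 2)
      (ψ β * (a + (q (β + 1) - q β)) * ((if β + 1 = γ then 1 else 0) - (if β = γ then 1 else 0)))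
      (q γ) := by
    intro β
    have := (((((hu (β + 1)).sub (hu β)).const_add a).pow 2).const_mul (ψ β)).div_const 2
    refine HasDerivAt.congr_deriv this ?_
    simp only [Pi.sub_apply, Function.update_eq_self]
    push_cast
    ring
  have hsum := (HasDerivAt.fun_sum (u := Finset.univ) fun β _ => hterm β).const_mul (1 / (m : ℝ))
  rw [hsum.deriv]
  congr 1
  simp only [mul_sub, Finset.sum_sub_distrib, ← eq_sub_iff_add_eq, mul_ite, mul_one, mul_zero,
    Finset.sum_ite_eq', Finset.mem_univ, if_true]

lemma deriv_energy_eq_zero_iff {m : ℕ} [NeZero m] (ψ : ZMod m → ℝ) (a : ℝ) (q : ZMod m → ℝ)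
    (γ : ZMod m) :
    deriv (fun t => (1 / (m : ℝ)) * ∑ β : ZMod m, ψ β * (a + (Function.update q γ t (β + 1)
      - Function.update q γ t β)) ^ 2 / 2) (q γ) = 0 ↔
    ψ (γ - 1) * (a + (q (γ - 1 + 1) - q (γ - 1))) = ψ γ * (a + (q (γ + 1) - q γ)) := by
  have hm : (1 / (m : ℝ)) ≠ 0 := one_div_ne_zero (Nat.cast_ne_zero.2 (NeZero.ne m))
  rw [deriv_energy, mul_eq_zero, or_iff_right hm, sub_eq_zero]

lemma sum_one_div_pos {m : ℕ} [NeZero m] {ψ : ZMod m → ℝ} (hψ : ∀ j, 0 < ψ j) :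
    0 < ∑ j : ZMod m, 1 / ψ j :=
  Finset.sum_pos (fun j _ => one_div_pos.2 (hψ j)) Finset.univ_nonempty

/-- A constant stress is necessarily `H(ψ) * a`. -/
lemma stress_eq {m : ℕ} [NeZero m] {ψ : ZMod m → ℝ} (hψ : ∀ j, 0 < ψ j) (a : ℝ)
    (q : ZMod m → ℝ)
    (h : ∀ γ : ZMod m, γ ≠ 0 →
      ψ (γ - 1) * (a + (q (γ - 1 + 1) - q (γ - 1))) = ψ γ * (a + (q (γ + 1) - q γ)))
    (β : ZMod m) :
    ψ β * (a + (q (β + 1) - q β)) = ((1 / (m : ℝ)) * ∑ j : ZMod m, 1 / ψ j)⁻¹ * a := by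
  have hm : (m : ℝ) ≠ 0 := Nat.cast_ne_zero.2 (NeZero.ne m)
  have hS := (sum_one_div_pos hψ).ne'
  have hc := eq_apply_zero_of_step (f := fun β => ψ β * (a + (q (β + 1) - q β))) h
  rw [hc β]
  set c := ψ 0 * (a + (q (0 + 1) - q 0))
  have hsum : ∑ β : ZMod m, (a + (q (β + 1) - q β)) = c * ∑ j : ZMod m, 1 / ψ j := by
    rw [Finset.mul_sum]
    refine Finset.sum_congr rfl fun j _ => ?_
    rw [← hc j]
    field_simp [(hψ j).ne']
  rw [Finset.sum_add_distrib, sum_diff_eq_zero] at hsum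
  simp only [Finset.sum_const, Finset.card_univ, ZMod.card, nsmul_eq_mul, add_zero] at hsum
  field_simp
  linarith


/-- There is exactly one shift vector `q : ZMod m → ℝ` with `q 0 = 0`
which is a critical point of the MQC element energy
`Ẽ(q) = (1/m) ∑ β, ψ β * (a + q (β+1) - q β)² / 2` (all partial derivatives with
respect to the components `q γ`, `γ ≠ 0`, vanish), and at this critical point
`Ẽ(q) = H(ψ) * a² / 2` with `H(ψ)` the harmonic mean of `ψ`. -/
theorem stmt6 (m : ℕ) [NeZero m] (ψ : ZMod m → ℝ) (hψ : ∀ j, 0 < ψ j) (a : ℝ) :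
    let E : (ZMod m → ℝ) → ℝ :=
      fun q => (1 / (m : ℝ)) * ∑ β : ZMod m, ψ β * (a + (q (β + 1) - q β)) ^ 2 / 2
    (∃! q : ZMod m → ℝ, q 0 = 0 ∧
      ∀ γ : ZMod m, γ ≠ 0 → deriv (fun t => E (Function.update q γ t)) (q γ) = 0) ∧
    (∀ q : ZMod m → ℝ, q 0 = 0 →
      (∀ γ : ZMod m, γ ≠ 0 → deriv (fun t => E (Function.update q γ t)) (q γ) = 0) →
      E q = ((1 / (m : ℝ)) * ∑ j : ZMod m, 1 / ψ j)⁻¹ * a ^ 2 / 2) := by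
  intro E
  have hm : (m : ℝ) ≠ 0 := Nat.cast_ne_zero.2 (NeZero.ne m)
  have hS := (sum_one_div_pos hψ).ne'
  have hE : ∀ q : ZMod m → ℝ, ∀ γ,
      deriv (fun t => E (Function.update q γ t)) (q γ) = 0 ↔
      ψ (γ - 1) * (a + (q (γ - 1 + 1) - q (γ - 1))) = ψ γ * (a + (q (γ + 1) - q γ)) :=
    deriv_energy_eq_zero_iff ψ a
  simp only [hE]
  set H := ((1 / (m : ℝ)) * ∑ j : ZMod m, 1 / ψ j)⁻¹ with hH
  constructor
  · obtain ⟨q, hq0, hq⟩ := exists_primitive (fun β => H * a * (1 / ψ β) - a) (by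
      rw [Finset.sum_sub_distrib, ← Finset.mul_sum]
      simp only [Finset.sum_const, Finset.card_univ, ZMod.card, nsmul_eq_mul]
      rw [hH]
      field_simp
      ring)
    have hσ : ∀ β, ψ β * (a + (q (β + 1) - q β)) = H * a := by
      intro β
      rw [hq]
      field_simp [(hψ β).ne']
      ring
    refine ⟨q, ⟨hq0, fun γ _ => by rw [hσ, hσ]⟩, ?_⟩
    rintro p ⟨hp0, hp⟩
    have hpσ := stress_eq hψ a p hp
    funext β
    have hconst := eq_apply_zero_of_step (f := fun β => p β - q β) (fun γ _ => by
      have h1 := mul_left_cancel₀ (hψ (γ - 1)).ne' ((hpσ (γ - 1)).trans (hσ (γ - 1)).symm)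
      rw [sub_add_cancel] at h1
      linarith) β
    simp only [hp0, hq0] at hconst
    linarith
  · intro q _ hq
    have hσ := stress_eq hψ a q hq
    have hsum : ∑ β : ZMod m, ψ β * (a + (q (β + 1) - q β)) ^ 2 / 2 =
        ∑ β : ZMod m, H * a / 2 * (a + (q (β + 1) - q β)) :=
      Finset.sum_congr rfl fun β _ => by rw [← hσ β]; ring
    change (1 / (m : ℝ)) * ∑ β : ZMod m, ψ β * (a + (q (β + 1) - q β)) ^ 2 / 2 = _
    rw [hsum, ← Finset.mul_sum, Finset.sum_add_distrib, sum_diff_eq_zero]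
    simp only [Finset.sum_const, Finset.card_univ, ZMod.card, nsmul_eq_mul, add_zero]
    field_simp
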